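/- Let Γ : ℂ → ℂ^N be complex entire, let ω ∈ ℝ, let σ₀ ≤ σ₁ be real numbers, and let T > 0. Then ‖e^{−ωσ₁}·A_T(σ₁) − e^{−ωσ₀}·A_T(σ₀)‖ ≤ (σ₁ − σ₀) · sup over σ ∈ [σ₀, σ₁] of (1/T)·e^{−ωσ}·‖e^{−iωT}Γ(σ + iT) − Γ(σ)‖. (This follows from Cauchy's theorem applied to the entire integrand e^{−ωt}Γ(t) on the rectangle with corners σ₀, σ₁, σ₁ + iT, σ₀ + iT.) -/

import Mathlib

/-!
The function `f z = e^{-ωz} Γ(z)` satisfies `f(σ + iτ) = e^{-ωσ} e^{-iωτ} Γ(σ + iτ)`, so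
`e^{-ωσ} A_T(σ)` is the mean of `f` along a vertical segment of length `T`. By Cauchy's theorem on
a rectangle, the integrals of `f` along the two vertical sides differ, up to a factor `i`, by as
much as the integrals along the two horizontal sides, and there the integrands differ by
`e^{-ωσ} (e^{-iωT} Γ(σ + iT) - Γ(σ))`.
-/

/-- The finite-time vertical Fourier average
`A_T(σ) = (1/T) ∫₀ᵀ e^{-iωτ} Γ(σ + iτ) dτ`. -/
noncomputable def fourierAvg {N : ℕ} (Γ : ℂ → EuclideanSpace ℂ (Fin N)) (ω σ T : ℝ) :
    EuclideanSpace ℂ (Fin N) :=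
  (1 / T : ℝ) • ∫ τ in (0:ℝ)..T,
    Complex.exp (-(Complex.I * ω * τ)) • Γ ((σ : ℂ) + (τ : ℂ) * Complex.I)

section Rectangle

open Complex Set
open scoped Interval

variable {x₀ x₁ y₀ y₁ : ℝ}

theorem continuousOn_comp_horizontal_line {X : Type*} [TopologicalSpace X] {f : ℂ → X} {y : ℝ}
    (hf : ContinuousOn f ([[x₀, x₁]] ×ℂ [[y₀, y₁]])) (hy : y ∈ [[y₀, y₁]]) :
    ContinuousOn (fun x : ℝ => f (x + y * I)) [[x₀, x₁]] :=
  hf.comp (by fun_prop) fun x hx => by simpa [mem_reProdIm] using ⟨hx, hy⟩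

variable {E : Type*} [NormedAddCommGroup E] [NormedSpace ℂ E] {f : ℂ → E}

theorem I_smul_integral_vertical_sub (hc : ContinuousOn f ([[x₀, x₁]] ×ℂ [[y₀, y₁]]))
    (hd : DifferentiableOn ℂ f (uIoo x₀ x₁ ×ℂ uIoo y₀ y₁)) :
    I • ((∫ y in y₀..y₁, f (x₁ + y * I)) - ∫ y in y₀..y₁, f (x₀ + y * I)) =
      ∫ x in x₀..x₁, (f (x + y₁ * I) - f (x + y₀ * I)) := by
  have cauchy := integral_boundary_rect_eq_zero_of_continuousOn_of_differentiableOn f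
    ⟨x₀, y₀⟩ ⟨x₁, y₁⟩ hc hd
  have htop : IntervalIntegrable (fun x : ℝ => f (x + y₁ * I)) MeasureTheory.volume x₀ x₁ :=
    (continuousOn_comp_horizontal_line hc right_mem_uIcc).intervalIntegrable
  have hbot : IntervalIntegrable (fun x : ℝ => f (x + y₀ * I)) MeasureTheory.volume x₀ x₁ :=
    (continuousOn_comp_horizontal_line hc left_mem_uIcc).intervalIntegrable
  rw [intervalIntegral.integral_sub htop hbot, smul_sub, ← sub_eq_zero, ← cauchy]
  abel

theorem norm_integral_vertical_sub_le (hc : ContinuousOn f ([[x₀, x₁]] ×ℂ [[y₀, y₁]]))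
    (hd : DifferentiableOn ℂ f (uIoo x₀ x₁ ×ℂ uIoo y₀ y₁)) :
    ‖(∫ y in y₀..y₁, f (x₁ + y * I)) - ∫ y in y₀..y₁, f (x₀ + y * I)‖ ≤
      (⨆ x : [[x₀, x₁]], ‖f ((x : ℝ) + y₁ * I) - f ((x : ℝ) + y₀ * I)‖) * |x₁ - x₀| := by
  have hcont : ContinuousOn (fun x : ℝ => ‖f (x + y₁ * I) - f (x + y₀ * I)‖) [[x₀, x₁]] :=
    ((continuousOn_comp_horizontal_line hc right_mem_uIcc).sub
      (continuousOn_comp_horizontal_line hc left_mem_uIcc)).norm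
  have hbdd := isCompact_uIcc.bddAbove_image hcont
  rw [image_eq_range] at hbdd
  rw [← one_mul ‖_ - _‖, ← norm_I, ← norm_smul, I_smul_integral_vertical_sub hc hd]
  exact intervalIntegral.norm_integral_le_of_norm_le_const fun x hx =>
    le_ciSup hbdd ⟨x, uIoc_subset_uIcc hx⟩

end Rectangle

section FourierAverage

open Complex Set

variable {E : Type*} [NormedAddCommGroup E] [NormedSpace ℂ E]

/-- The finite-time vertical Fourier average `(1/T) ∫₀ᵀ e^{-iωτ} Γ(σ + iτ) dτ` of a function with
values in a complex normed space. It extends `fourierAvg` to such functions and to complex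
frequencies `ω`. -/
noncomputable def verticalFourierAvg (Γ : ℂ → E) (ω : ℂ) (σ T : ℝ) : E :=
  (1 / T : ℝ) • ∫ τ in (0 : ℝ)..T, exp (-(I * ω * τ)) • Γ (σ + τ * I)

theorem fourierAvg_eq_verticalFourierAvg {N : ℕ} (Γ : ℂ → EuclideanSpace ℂ (Fin N))
    (ω σ T : ℝ) : fourierAvg Γ ω σ T = verticalFourierAvg Γ ω σ T :=
  rfl

theorem exp_smul_verticalFourierAvg (Γ : ℂ → E) (ω : ℂ) (σ T : ℝ) :
    exp (-(ω * σ)) • verticalFourierAvg Γ ω σ T =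
      (1 / T : ℝ) • ∫ τ in (0 : ℝ)..T, exp (-(ω * (σ + τ * I))) • Γ (σ + τ * I) := by
  rw [verticalFourierAvg, smul_comm, ← intervalIntegral.integral_smul]
  simp only [smul_smul, ← exp_add]
  ring_nf

theorem norm_exp_smul_sub_exp_smul (ω z h : ℂ) (u v : E) :
    ‖exp (-(ω * (z + h))) • u - exp (-(ω * z)) • v‖ =
      Real.exp (-(ω * z).re) * ‖exp (-(ω * h)) • u - v‖ := by
  rw [mul_add, neg_add, exp_add, mul_smul, ← smul_sub, norm_smul, norm_exp, neg_re]

theorem scaled_fourierAvg_difference_bound_general [CompleteSpace E] {Γ : ℂ → E} (ω : ℂ)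
    {σ₀ σ₁ T : ℝ} (hσ : σ₀ ≤ σ₁) (hT : 0 < T)
    (hc : ContinuousOn Γ (Icc σ₀ σ₁ ×ℂ Icc 0 T))
    (hd : DifferentiableOn ℂ Γ (Ioo σ₀ σ₁ ×ℂ Ioo 0 T)) :
    ‖exp (-(ω * σ₁)) • verticalFourierAvg Γ ω σ₁ T -
        exp (-(ω * σ₀)) • verticalFourierAvg Γ ω σ₀ T‖ ≤
      (σ₁ - σ₀) * ⨆ σ : Icc σ₀ σ₁, (1 / T) * Real.exp (-(ω.re * (σ : ℝ))) *
        ‖exp (-(I * ω * T)) • Γ ((σ : ℝ) + T * I) - Γ (σ : ℝ)‖ := by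
  set f : ℂ → E := fun z => exp (-(ω * z)) • Γ z
  have hexp : Differentiable ℂ fun z : ℂ => exp (-(ω * z)) := by fun_prop
  have hfc : ContinuousOn f (Icc σ₀ σ₁ ×ℂ Icc 0 T) := hexp.continuous.continuousOn.smul hc
  have hfd : DifferentiableOn ℂ f (Ioo σ₀ σ₁ ×ℂ Ioo 0 T) := hexp.differentiableOn.smul hd
  have hhoriz (σ : ℝ) : ‖f (σ + T * I) - f (σ + (0 : ℝ) * I)‖ =
      Real.exp (-(ω.re * σ)) * ‖exp (-(I * ω * T)) • Γ (σ + T * I) - Γ σ‖ := by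
    simp only [f, ofReal_zero, zero_mul, add_zero, norm_exp_smul_sub_exp_smul, re_mul_ofReal]
    ring_nf
  set S := ⨆ σ : Icc σ₀ σ₁, Real.exp (-(ω.re * (σ : ℝ))) *
    ‖exp (-(I * ω * T)) • Γ ((σ : ℝ) + T * I) - Γ (σ : ℝ)‖ with hS
  have hvert : ‖(∫ τ in (0 : ℝ)..T, f (σ₁ + τ * I)) - ∫ τ in (0 : ℝ)..T, f (σ₀ + τ * I)‖ ≤
      S * (σ₁ - σ₀) := by
    rw [← uIcc_of_le hσ, ← uIcc_of_le hT.le] at hfc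
    rw [← uIoo_of_le hσ, ← uIoo_of_le hT.le] at hfd
    simp only [hS, ← hhoriz]
    rw [← uIcc_of_le hσ, ← abs_of_nonneg (sub_nonneg.2 hσ)]
    exact norm_integral_vertical_sub_le hfc hfd
  have hT_inv : 0 ≤ 1 / T := by positivity
  simp only [mul_assoc (1 / T), ← Real.mul_iSup_of_nonneg hT_inv]
  calc
    _ = 1 / T * ‖(∫ τ in (0 : ℝ)..T, f (σ₁ + τ * I)) - ∫ τ in (0 : ℝ)..T, f (σ₀ + τ * I)‖ := by
      rw [exp_smul_verticalFourierAvg, exp_smul_verticalFourierAvg, ← smul_sub, norm_smul,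
        Real.norm_of_nonneg hT_inv]
    _ ≤ 1 / T * (S * (σ₁ - σ₀)) := mul_le_mul_of_nonneg_left hvert hT_inv
    _ = (σ₁ - σ₀) * (1 / T * S) := by ring

end FourierAverage

/-- Cauchy rectangle estimate for the scaled finite-time Fourier averages of a complex
entire map: the difference of `e^{-ωσ} A_T(σ)` at `σ = σ₀, σ₁` is controlled by the
supremum of the horizontal boundary contributions. -/
theorem scaled_fourierAvg_difference_bound
    (N : ℕ) (Γ : ℂ → EuclideanSpace ℂ (Fin N)) (hΓ : Differentiable ℂ Γ)
    (ω σ₀ σ₁ : ℝ) (hσ : σ₀ ≤ σ₁) (T : ℝ) (hT : 0 < T) :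
    ‖Real.exp (-(ω * σ₁)) • fourierAvg Γ ω σ₁ T -
        Real.exp (-(ω * σ₀)) • fourierAvg Γ ω σ₀ T‖ ≤
      (σ₁ - σ₀) * ⨆ σ : Set.Icc σ₀ σ₁, (1 / T) * Real.exp (-(ω * (σ : ℝ))) *
        ‖Complex.exp (-(Complex.I * ω * T)) •
            Γ (((σ : ℝ) : ℂ) + (T : ℂ) * Complex.I) - Γ ((σ : ℝ) : ℂ)‖ := by
  simpa [fourierAvg_eq_verticalFourierAvg, ← Complex.coe_smul (Real.exp _)] using
    scaled_fourierAvg_difference_bound_general ω hσ hT hΓ.continuous.continuousOn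
      hΓ.differentiableOn
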